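/- arXiv:1103.1839 — 6 statements merged into one kernel-verified Lean document; each statement's English description precedes it below -/
import Mathlib

section
/- For every nonempty A ⊆ N and every integer j ≥ 1, ∑_{B : N∖A ⊆ B ⊆ N} (-1)^{|A|+|B|+n+1} ( ∑_{∅ ≠ C ⊆ N, C ∩ B = ∅} v_C )^j = − ∑_{(C₁,…,C_j)} ∏_{i=1}^j v_{C_i}, where the sum on the right ranges over all ordered j-tuples (C₁,…,C_j) of nonempty subsets of N with C₁ ∪ ⋯ ∪ C_j = A. -/
open Finset

/-!
Substituting `B = N \ S` with `S ⊆ A`, the condition `C ∩ B = ∅` becomes `C ⊆ S` and the sign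
becomes `-(-1) ^ |A \ S|`. The power `(∑_{∅ ≠ C ⊆ S} v_C) ^ j` expands into a sum over the tuples of
nonempty sets whose union is contained in `S`, so the claim is Möbius inversion on the Boolean
lattice, applied to the function sending `T` to the weight of the tuples whose union is `T`.
-/

section BooleanMoebiusInversion

variable {α M : Type*} [DecidableEq α] [AddCommGroup M]

lemma sum_Icc_neg_one_pow_card_sdiff (U A : Finset α) :
    ∑ S ∈ Icc U A, (-1 : ℤ) ^ #(A \ S) = if U = A then 1 else 0 := by
  by_cases hUA : U ⊆ A
  · have sdiff_eq_empty : A \ U = ∅ ↔ U = A := by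
      rw [sdiff_eq_empty_iff_subset, subset_antisymm_iff, and_iff_right hUA]
    calc ∑ S ∈ Icc U A, (-1 : ℤ) ^ #(A \ S)
        = ∑ D ∈ (A \ U).powerset, (-1 : ℤ) ^ #D :=
          sum_nbij' (A \ ·) (A \ ·) (by grind) (by grind) (by grind) (by grind) (by grind)
      _ = if U = A then 1 else 0 := by
          simp only [sum_powerset_neg_one_pow_card, sdiff_eq_empty]
  · have hne : U ≠ A := fun h => hUA h.subset
    rw [Icc_eq_empty hUA, sum_empty, if_neg hne]

lemma sum_powerset_neg_one_pow_card_sdiff_smul_sum_powerset (h : Finset α → M) (A : Finset α) :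
    ∑ S ∈ A.powerset, (-1 : ℤ) ^ #(A \ S) • ∑ T ∈ S.powerset, h T = h A := by
  calc ∑ S ∈ A.powerset, (-1 : ℤ) ^ #(A \ S) • ∑ T ∈ S.powerset, h T
      = ∑ T ∈ A.powerset, ∑ S ∈ Icc T A, (-1 : ℤ) ^ #(A \ S) • h T := by
        simp only [smul_sum]
        exact sum_comm' (by grind)
    _ = ∑ T ∈ A.powerset, if T = A then h T else 0 := by
        simp only [← sum_smul, sum_Icc_neg_one_pow_card_sdiff, ite_smul, one_smul, zero_smul]
    _ = h A := by
        rw [sum_ite_eq', if_pos (mem_powerset_self A)]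

end BooleanMoebiusInversion

section LabelledSets

variable {α ι R : Type*} {κ : ι → Type*} [DecidableEq α] [Fintype ι] [DecidableEq ι]

lemma prod_sum_filter_subset_eq_sum_powerset [CommSemiring R] (s : ∀ i, Finset (κ i))
    (u : ∀ i, κ i → Finset α) (w : ∀ i, κ i → R) (S : Finset α) :
    ∏ i, ∑ k ∈ s i with u i k ⊆ S, w i k =
      ∑ T ∈ S.powerset, ∑ f ∈ Fintype.piFinset s with univ.biUnion (fun i => u i (f i)) = T,
        ∏ i, w i (f i) := by
  have tuples_in_S : Fintype.piFinset (fun i => {k ∈ s i | u i k ⊆ S}) =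
      {f ∈ Fintype.piFinset s | univ.biUnion (fun i => u i (f i)) ∈ S.powerset} := by
    ext f
    simp only [Fintype.mem_piFinset, mem_filter, mem_powerset, biUnion_subset, mem_univ,
      true_imp_iff, forall_and]
  rw [prod_univ_sum, tuples_in_S, sum_fiberwise_eq_sum_filter]

lemma sum_neg_one_pow_card_sdiff_mul_prod_sum [CommRing R] (s : ∀ i, Finset (κ i))
    (u : ∀ i, κ i → Finset α) (w : ∀ i, κ i → R) (A : Finset α) :
    ∑ S ∈ A.powerset, (-1 : R) ^ #(A \ S) * ∏ i, ∑ k ∈ s i with u i k ⊆ S, w i k =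
      ∑ f ∈ Fintype.piFinset s with univ.biUnion (fun i => u i (f i)) = A, ∏ i, w i (f i) := by
  rw [← sum_powerset_neg_one_pow_card_sdiff_smul_sum_powerset
    (fun T => ∑ f ∈ Fintype.piFinset s with univ.biUnion (fun i => u i (f i)) = T, ∏ i, w i (f i))]
  simp only [prod_sum_filter_subset_eq_sum_powerset, zsmul_eq_mul, Int.cast_pow, Int.cast_neg,
    Int.cast_one]

end LabelledSets

section Complementation

variable {α M R : Type*} [DecidableEq α]

lemma sum_filter_sdiff_subset_eq_sum_powerset [AddCommMonoid M] {N A : Finset α} (hA : A ⊆ N)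
    (F : Finset α → M) :
    ∑ B ∈ N.powerset with N \ A ⊆ B, F B = ∑ S ∈ A.powerset, F (N \ S) :=
  sum_nbij' (N \ ·) (N \ ·) (by grind) (by grind) (by grind) (by grind)
    fun B hB => by
      rw [Finset.sdiff_sdiff_eq_self (mem_powerset.1 (mem_filter.1 hB).1)]

lemma neg_one_pow_card_add_card_sdiff [Ring R] {N A S : Finset α} (hA : A ⊆ N) (hS : S ⊆ A) :
    (-1 : R) ^ (#A + #(N \ S) + #N + 1) = -(-1) ^ #(A \ S) := by
  have card_N : #(N \ S) + #S = #N := card_sdiff_add_card_eq_card (hS.trans hA)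
  have card_A : #(A \ S) + #S = #A := card_sdiff_add_card_eq_card hS
  have exponent : #A + #(N \ S) + #N + 1 = #(A \ S) + 1 + 2 * #N := by omega
  rw [exponent, pow_add, pow_mul, neg_one_sq, one_pow, mul_one, pow_succ, mul_neg_one]

lemma sum_inter_sdiff_eq_empty_eq_sum_subset [AddCommMonoid M] (N S : Finset α)
    (p : Finset α → Prop) [DecidablePred p] (v : Finset α → M) :
    ∑ C ∈ N.powerset with p C ∧ C ∩ (N \ S) = ∅, v C =
      ∑ C ∈ (univ.filter fun C : N.powerset => p C) with C.1 ⊆ S, v C := by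
  rw [filter_filter, sum_filter, sum_filter, ← sum_coe_sort]
  refine sum_congr rfl fun C _ => ?_
  have hC : C.1 ⊆ N := mem_powerset.1 C.2
  have disjoint_iff_subset : C.1 ∩ (N \ S) = ∅ ↔ C.1 ⊆ S := by
    rw [← inter_sdiff_assoc, inter_eq_left.2 hC, sdiff_eq_empty_iff_subset]
  simp only [disjoint_iff_subset]

end Complementation

theorem stmt9_general {α ι R : Type*} [DecidableEq α] [Fintype ι] [DecidableEq ι] [CommRing R]
    (N : Finset α) (v : ι → Finset α → R) (A : Finset α) (hA : A ⊆ N) :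
    ∑ B ∈ N.powerset with N \ A ⊆ B, (-1 : R) ^ (#A + #B + #N + 1) *
        ∏ i, ∑ C ∈ N.powerset with C ≠ ∅ ∧ C ∩ B = ∅, v i C =
      -∑ f : ι → N.powerset with (∀ i, (f i).1 ≠ ∅) ∧ univ.biUnion (fun i => (f i).1) = A,
        ∏ i, v i (f i) := by
  have nonempty_tuples : (univ.filter fun f : ι → N.powerset => ∀ i, (f i).1 ≠ ∅) =
      Fintype.piFinset fun _ => univ.filter fun C : N.powerset => C.1 ≠ ∅ := by
    ext f
    simp only [mem_filter, mem_univ, true_and, Fintype.mem_piFinset]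
  rw [sum_filter_sdiff_subset_eq_sum_powerset hA, ← filter_filter, nonempty_tuples,
    ← sum_neg_one_pow_card_sdiff_mul_prod_sum (fun _ => univ.filter fun C : N.powerset => C.1 ≠ ∅)
      (fun _ C => C.1) (fun i C => v i C),
    ← sum_neg_distrib]
  refine sum_congr rfl fun S hS => ?_
  simp only [neg_one_pow_card_add_card_sdiff hA (mem_powerset.1 hS),
    sum_inter_sdiff_eq_empty_eq_sum_subset, neg_mul]

theorem stmt9 {α : Type*} [DecidableEq α] (N : Finset α) (v : Finset α → ℝ)
    (A : Finset α) (hA : A ⊆ N) (hAne : A ≠ ∅) (j : ℕ) (hj : 1 ≤ j) :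
    (∑ B ∈ N.powerset.filter (fun B => N \ A ⊆ B),
        (-1 : ℝ) ^ (A.card + B.card + N.card + 1) *
          (∑ C ∈ N.powerset.filter (fun C => C ≠ ∅ ∧ C ∩ B = ∅), v C) ^ j) =
      - ∑ f ∈ (Finset.univ :
            Finset (Fin j → {C : Finset α // C ∈ N.powerset})).filter
          (fun f => (∀ i, (f i : Finset α) ≠ ∅) ∧
            Finset.univ.biUnion (fun i => ((f i : Finset α))) = A),
        ∏ i, v (f i) := by
  simpa using stmt9_general N (fun _ : Fin j => v) A hA
end

section
/- Let A be a nonempty finite set and w : (nonempty subsets of A) → ℝ any function. Then for every integer j ≥ 1, ∑_{∅ ≠ B ⊆ A} (-1)^{|B|+1} ( ∑_{∅ ≠ C ⊆ B} w_C )^j = (-1)^{|A|+1} ∑_{(C₁,…,C_j)} ∏_{i=1}^j w_{C_i}, where the sum on the right ranges over all ordered j-tuples (C₁,…,C_j) of nonempty subsets of A with C₁ ∪ ⋯ ∪ C_j = A. -/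
open Finset

/-!
Expand the `j`-th power as a sum over `j`-tuples of nonempty subsets of `B` and exchange the order
of summation: a tuple with union `U` contributes its product weighted by `∑ (-1) ^ |B|` over
`U ⊆ B ⊆ A`, and this alternating sum vanishes unless `U = A`.
-/

section AlternatingSums

variable {α R : Type*} [DecidableEq α] [CommRing R]

theorem sum_Icc_neg_one_pow_card {U A : Finset α} (hUA : U ⊆ A) :
    ∑ B ∈ Icc U A, (-1 : R) ^ #B = if U = A then (-1) ^ #A else 0 := by
  have disjoint_of_mem {D : Finset α} (hD : D ∈ (A \ U).powerset) : Disjoint U D :=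
    disjoint_sdiff.mono_right (mem_powerset.1 hD)
  have union_injOn : Set.InjOn (U ∪ ·) ((A \ U).powerset : Set (Finset α)) :=
    Set.LeftInvOn.injOn (f₁' := (· \ U)) fun D hD ↦ union_sdiff_cancel_left (disjoint_of_mem hD)
  have sum_powerset : ∑ D ∈ (A \ U).powerset, (-1 : R) ^ #D = if A \ U = ∅ then 1 else 0 :=
    mod_cast congrArg (Int.cast : ℤ → R) (sum_powerset_neg_one_pow_card (x := A \ U))
  have sdiff_eq_empty : A \ U = ∅ ↔ U = A :=
    sdiff_eq_empty_iff_subset.trans ⟨hUA.antisymm, fun h ↦ h.ge⟩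
  calc ∑ B ∈ Icc U A, (-1 : R) ^ #B
      = ∑ D ∈ (A \ U).powerset, (-1) ^ #(U ∪ D) := by
        rw [Icc_eq_image_powerset hUA, sum_image union_injOn]
    _ = (-1) ^ #U * ∑ D ∈ (A \ U).powerset, (-1) ^ #D := by
        rw [mul_sum]
        exact sum_congr rfl fun D hD ↦ by rw [card_union_of_disjoint (disjoint_of_mem hD), pow_add]
    _ = if U = A then (-1) ^ #A else 0 := by
        rw [sum_powerset, mul_ite, mul_one, mul_zero]
        simp only [sdiff_eq_empty]
        split_ifs with h
        · rw [h]
        · rfl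

theorem sum_powerset_neg_one_pow_card_mul_sum_filter_subset {τ : Type*} {A : Finset α}
    {T : Finset τ} {U : τ → Finset α} (hU : ∀ t ∈ T, U t ⊆ A) (F : τ → R) :
    ∑ B ∈ A.powerset, (-1) ^ #B * ∑ t ∈ T with U t ⊆ B, F t =
      (-1) ^ #A * ∑ t ∈ T with U t = A, F t := by
  calc ∑ B ∈ A.powerset, (-1) ^ #B * ∑ t ∈ T with U t ⊆ B, F t
      = ∑ t ∈ T, ∑ B ∈ Icc (U t) A, (-1) ^ #B * F t := by
        simp only [mul_sum]
        refine sum_comm' fun B t ↦ ?_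
        simp only [mem_powerset, mem_filter, mem_Icc]
        tauto
    _ = ∑ t ∈ T, if U t = A then (-1) ^ #A * F t else 0 :=
        sum_congr rfl fun t ht ↦ by
          rw [← sum_mul, sum_Icc_neg_one_pow_card (hU t ht), ite_mul, zero_mul]
    _ = (-1) ^ #A * ∑ t ∈ T with U t = A, F t := by rw [← sum_filter, mul_sum]

end AlternatingSums

section Tuples

variable {α κ ι R : Type*} [DecidableEq α] [Fintype ι] [DecidableEq ι]

theorem prod_sum_filter_subset [CommSemiring R] (S : ι → Finset κ) (c : κ → Finset α)
    (w : ι → κ → R) (B : Finset α) :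
    ∏ i, ∑ k ∈ S i with c k ⊆ B, w i k =
      ∑ f ∈ Fintype.piFinset S with univ.biUnion (fun i ↦ c (f i)) ⊆ B, ∏ i, w i (f i) := by
  rw [prod_univ_sum]
  refine sum_congr ?_ fun _ _ ↦ rfl
  ext f
  simp only [Fintype.mem_piFinset, mem_filter, biUnion_subset, mem_univ, true_imp_iff, forall_and]

theorem sum_powerset_neg_one_pow_card_mul_prod_sum [CommRing R] {A : Finset α}
    {S : ι → Finset κ} {c : κ → Finset α} (hc : ∀ i, ∀ k ∈ S i, c k ⊆ A) (w : ι → κ → R) :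
    ∑ B ∈ A.powerset, (-1) ^ #B * ∏ i, ∑ k ∈ S i with c k ⊆ B, w i k =
      (-1) ^ #A *
        ∑ f ∈ Fintype.piFinset S with univ.biUnion (fun i ↦ c (f i)) = A, ∏ i, w i (f i) := by
  simp only [prod_sum_filter_subset]
  exact sum_powerset_neg_one_pow_card_mul_sum_filter_subset
    (fun f hf ↦ biUnion_subset.2 fun i _ ↦ hc i (f i) (Fintype.mem_piFinset.1 hf i)) _

end Tuples

theorem sum_powerset_filter_eq_sum_subtype {α M : Type*} [DecidableEq α] [AddCommMonoid M]
    {A B : Finset α} (hBA : B ⊆ A) (p : Finset α → Prop) [DecidablePred p] (w : Finset α → M) :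
    ∑ C ∈ B.powerset with p C, w C =
      ∑ C ∈ {C : {C // C ∈ A.powerset} | p C} with C.1 ⊆ B, w C := by
  rw [filter_filter, sum_filter (s := univ),
    sum_coe_sort A.powerset fun C ↦ if p C ∧ C ⊆ B then w C else 0, ← sum_filter]
  refine sum_congr ?_ fun _ _ ↦ rfl
  ext C
  simp only [mem_filter, mem_powerset]
  exact ⟨fun ⟨hCB, hp⟩ ↦ ⟨hCB.trans hBA, hp, hCB⟩, fun ⟨_, hp, hCB⟩ ↦ ⟨hCB, hp⟩⟩

theorem stmt10_general {α R : Type*} [DecidableEq α] [CommRing R] (A : Finset α)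
    (w : Finset α → R) {j : ℕ} (hj : 1 ≤ j) :
    ∑ B ∈ A.powerset with B ≠ ∅, (-1) ^ (#B + 1) * (∑ C ∈ B.powerset with C ≠ ∅, w C) ^ j =
      (-1) ^ (#A + 1) *
        ∑ f : Fin j → {C // C ∈ A.powerset} with
          (∀ i, (f i).1 ≠ ∅) ∧ univ.biUnion (fun i ↦ (f i).1) = A, ∏ i, w (f i) := by
  let S : Finset {C // C ∈ A.powerset} := {C | C.1 ≠ ∅}
  have power_eq_prod {B : Finset α} (hB : B ∈ A.powerset) :
      (∑ C ∈ B.powerset with C ≠ ∅, w C) ^ j = ∏ _i : Fin j, ∑ C ∈ S with C.1 ⊆ B, w C := by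
    rw [sum_powerset_filter_eq_sum_subtype (mem_powerset.1 hB), Fin.prod_const]
  have nonempty_tuples :
      Fintype.piFinset (fun _ : Fin j ↦ S) = univ.filter fun f ↦ ∀ i, (f i).1 ≠ ∅ := by
    ext f
    simp only [S, Fintype.mem_piFinset, mem_filter, mem_univ, true_and]
  have power_empty : (∑ C ∈ (∅ : Finset α).powerset with C ≠ ∅, w C) ^ j = 0 := by
    rw [powerset_empty, filter_singleton, if_neg (not_not.2 rfl), sum_empty,
      zero_pow (Nat.one_le_iff_ne_zero.1 hj)]
  rw [sum_filter_of_ne (by rintro _ _ hne rfl; exact hne (by rw [power_empty, mul_zero]))]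
  simp only [pow_succ, mul_neg_one, neg_mul, sum_neg_distrib, neg_inj]
  rw [sum_congr rfl fun B hB ↦ by rw [power_eq_prod hB],
    sum_powerset_neg_one_pow_card_mul_prod_sum (fun _ C _ ↦ mem_powerset.1 C.2),
    nonempty_tuples, filter_filter]

theorem stmt10 {α : Type*} [DecidableEq α] (A : Finset α) (hA : A ≠ ∅)
    (w : Finset α → ℝ) (j : ℕ) (hj : 1 ≤ j) :
    (∑ B ∈ A.powerset.filter (fun B => B ≠ ∅),
        (-1 : ℝ) ^ (B.card + 1) *
          (∑ C ∈ B.powerset.filter (fun C => C ≠ ∅), w C) ^ j) =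
      (-1 : ℝ) ^ (A.card + 1) *
        ∑ f ∈ (Finset.univ :
            Finset (Fin j → {C : Finset α // C ∈ A.powerset})).filter
          (fun f => (∀ i, (f i : Finset α) ≠ ∅) ∧
            Finset.univ.biUnion (fun i => ((f i : Finset α))) = A),
        ∏ i, w (f i) :=
  stmt10_general A w hj
end

section
/- Assume u^N > 0. Then for every nonempty A ⊆ N: ∑_{B : N∖A ⊆ B ⊆ N} (-1)^{|A|+|B|+n+1} ψ(u^B) = ψ'(u^N) · v_A − ∑_{j=2}^∞ (b(j, u^N)/j!) ∑_{(C₁,…,C_j)} ∏_{i=1}^j v_{C_i}, where the inner sum ranges over all ordered j-tuples (C₁,…,C_j) of nonempty subsets of N with C₁ ∪ ⋯ ∪ C_j = A, and the series over j converges absolutely. -/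
open MeasureTheory Set Finset

/-!
Put `W D = ∑_{∅ ≠ C ⊆ D} v_C`, so that `u^{N ∖ D} = u^N - W D`. Expanding `ψ` around `u^N` gives
`ψ(u^N - W D) = ψ(u^N) - ψ'(u^N) W D + ∑_{j ≥ 2} (b(j, u^N) / j!) (W D)^j`, where sum and integral
may be exchanged because all terms are nonnegative and the sum is integrable. Now apply
`∑_{D ⊆ A} (-1)^{|A ∖ D|}` to both sides: since `(W D)^j` is the sum of `∏ v_{C_i}` over the tuples
whose union is contained in `D`, Möbius inversion on the Boolean lattice turns it into the sum over
the tuples whose union equals `A`, which is `0` for `j = 0` and `v_A` for `j = 1`.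
-/

section BooleanMoebius

variable {α ι M R : Type*} [DecidableEq α]

theorem sum_powerset_filter_superset [AddCommMonoid M] {E N : Finset α} (hE : E ⊆ N)
    (g : Finset α → M) :
    ∑ B ∈ N.powerset with E ⊆ B, g B = ∑ D ∈ (N \ E).powerset, g (N \ D) := by
  refine Finset.sum_nbij' (N \ ·) (N \ ·) ?_ ?_ ?_ ?_ ?_ <;>
    simp only [Finset.mem_filter, Finset.mem_powerset]
  · exact fun B hB ↦ Finset.sdiff_subset_sdiff subset_rfl hB.2
  · refine fun D hD ↦ ⟨Finset.sdiff_subset, ?_⟩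
    simpa [Finset.sdiff_sdiff_eq_self hE] using Finset.sdiff_subset_sdiff (subset_refl N) hD
  · exact fun B hB ↦ Finset.sdiff_sdiff_eq_self hB.1
  · exact fun D hD ↦ Finset.sdiff_sdiff_eq_self (hD.trans Finset.sdiff_subset)
  · exact fun B hB ↦ by rw [Finset.sdiff_sdiff_eq_self hB.1]

variable [Ring R]

theorem sum_neg_one_pow_card_sdiff_filter_superset (A E : Finset α) :
    ∑ D ∈ A.powerset with E ⊆ D, (-1 : R) ^ #(A \ D) = if E = A then 1 else 0 := by
  by_cases hE : E ⊆ A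
  · have alternating : ∑ F ∈ (A \ E).powerset, (-1 : R) ^ #F = if A \ E = ∅ then 1 else 0 := by
      exact_mod_cast congrArg (Int.cast : ℤ → R) (sum_powerset_neg_one_pow_card (x := A \ E))
    have sdiff_eq_empty : A \ E = ∅ ↔ E = A :=
      Finset.sdiff_eq_empty_iff_subset.trans ⟨hE.antisymm, fun h ↦ h.ge⟩
    rw [sum_powerset_filter_superset hE, ← if_congr sdiff_eq_empty rfl rfl, ← alternating]
    refine Finset.sum_congr rfl fun F hF ↦ ?_
    rw [Finset.sdiff_sdiff_eq_self ((Finset.mem_powerset.1 hF).trans Finset.sdiff_subset)]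
  · rw [if_neg fun h ↦ hE h.subset, Finset.filter_false_of_mem, Finset.sum_empty]
    exact fun D hD h ↦ hE (h.trans (Finset.mem_powerset.1 hD))

theorem sum_neg_one_pow_card_sdiff_mul_sum_filter_subset (s : Finset ι) (S : ι → Finset α)
    (f : ι → R) (A : Finset α) :
    ∑ D ∈ A.powerset, (-1) ^ #(A \ D) * ∑ i ∈ s with S i ⊆ D, f i = ∑ i ∈ s with S i = A, f i := by
  calc ∑ D ∈ A.powerset, (-1) ^ #(A \ D) * ∑ i ∈ s with S i ⊆ D, f i
      = ∑ i ∈ s, (∑ D ∈ A.powerset with S i ⊆ D, (-1) ^ #(A \ D)) * f i := by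
        simp_rw [Finset.sum_filter, Finset.mul_sum, Finset.sum_mul, mul_ite, ite_mul, mul_zero,
          zero_mul]
        exact Finset.sum_comm
    _ = ∑ i ∈ s with S i = A, f i := by
        simp_rw [sum_neg_one_pow_card_sdiff_filter_superset, Finset.sum_filter, ite_mul, one_mul,
          zero_mul]

theorem sum_neg_one_pow_filter_sdiff_subset {A N : Finset α} (hA : A ⊆ N) (g : Finset α → R) :
    ∑ B ∈ N.powerset with N \ A ⊆ B, (-1) ^ (#A + #B + #N + 1) * g B =
      -∑ D ∈ A.powerset, (-1) ^ #(A \ D) * g (N \ D) := by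
  rw [sum_powerset_filter_superset Finset.sdiff_subset, Finset.sdiff_sdiff_eq_self hA,
    ← Finset.sum_neg_distrib]
  refine Finset.sum_congr rfl fun D hD ↦ ?_
  have hDA : D ⊆ A := Finset.mem_powerset.1 hD
  have exponent : #A + #(N \ D) + #N + 1 = #(A \ D) + 2 * #N + 1 := by
    have := Finset.card_sdiff_add_card_eq_card hDA
    have := Finset.card_sdiff_add_card_eq_card (hDA.trans hA)
    omega
  rw [exponent, pow_succ, pow_add, pow_mul]
  simp

end BooleanMoebius

section CoveringSum

variable {α R : Type*} [DecidableEq α]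

/-- The total weight of the members of the family `s` contained in `D`. -/
def weightBelow [AddCommMonoid R] (s : Finset (Finset α)) (v : Finset α → R) (D : Finset α) : R :=
  ∑ C ∈ s with C ⊆ D, v C

/-- The total weight of the members of the family `s` meeting `B`; this is `u^B` when `s` consists
of the nonempty subsets of `N`. -/
def weightMeeting [AddCommMonoid R] (s : Finset (Finset α)) (v : Finset α → R) (B : Finset α) : R :=
  ∑ C ∈ s with (C ∩ B).Nonempty, v C

/-- The sum of `∏ v (C i)` over the ordered `j`-tuples `C` of members of the family `s` whose union
is exactly `A`. -/
def coveringSum [CommSemiring R] (s : Finset (Finset α)) (v : Finset α → R) (A : Finset α) (j : ℕ) :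
    R :=
  ∑ C ∈ Fintype.piFinset (fun _ : Fin j ↦ s) with Finset.univ.biUnion C = A, ∏ i, v (C i)

theorem weightMeeting_sdiff [AddCommGroup R] {s : Finset (Finset α)} {N : Finset α}
    (hne : ∅ ∉ s) (hsub : ∀ C ∈ s, C ⊆ N) (v : Finset α → R) (D : Finset α) :
    weightMeeting s v (N \ D) = weightMeeting s v N - weightBelow s v D := by
  have meeting_sdiff : ∀ C ∈ s, (C ∩ (N \ D)).Nonempty ↔ ¬C ⊆ D := fun C hC ↦ by
    rw [← Finset.inter_sdiff_assoc, Finset.inter_eq_left.2 (hsub C hC), Finset.sdiff_nonempty]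
  have meeting_all : ∀ C ∈ s, (C ∩ N).Nonempty := fun C hC ↦ by
    rw [Finset.inter_eq_left.2 (hsub C hC), Finset.nonempty_iff_ne_empty]
    exact ne_of_mem_of_not_mem hC hne
  rw [weightMeeting, weightMeeting, weightBelow, Finset.filter_congr meeting_sdiff,
    Finset.filter_true_of_mem meeting_all, ← Finset.sum_filter_add_sum_filter_not s (· ⊆ D),
    add_sub_cancel_left]

theorem weightBelow_pow [CommSemiring R] (s : Finset (Finset α)) (v : Finset α → R) (D : Finset α)
    (j : ℕ) :
    weightBelow s v D ^ j =
      ∑ C ∈ Fintype.piFinset (fun _ : Fin j ↦ s) with Finset.univ.biUnion C ⊆ D,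
        ∏ i, v (C i) := by
  rw [weightBelow, Finset.sum_pow']
  congr 1
  ext C
  simp [forall_and]

section CommRing

variable [CommRing R] (s : Finset (Finset α)) (v : Finset α → R) (A : Finset α)

theorem sum_neg_one_pow_card_sdiff_mul_weightBelow_pow (j : ℕ) :
    ∑ D ∈ A.powerset, (-1) ^ #(A \ D) * weightBelow s v D ^ j = coveringSum s v A j := by
  simp_rw [weightBelow_pow]
  exact sum_neg_one_pow_card_sdiff_mul_sum_filter_subset _ _ _ A

theorem sum_neg_one_pow_card_sdiff_mul_weightBelow :
    ∑ D ∈ A.powerset, (-1) ^ #(A \ D) * weightBelow s v D = if A ∈ s then v A else 0 := by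
  calc ∑ D ∈ A.powerset, (-1) ^ #(A \ D) * weightBelow s v D = ∑ C ∈ s with C = A, v C :=
        sum_neg_one_pow_card_sdiff_mul_sum_filter_subset s id v A
    _ = if A ∈ s then v A else 0 := by rw [Finset.sum_filter, Finset.sum_ite_eq']

variable {s v A}

theorem hasSum_mul_coveringSum [TopologicalSpace R] [IsTopologicalRing R] {c : ℕ → R}
    {g : Finset α → R} {p q : R} (hAs : A ∈ s) (hA : A ≠ ∅)
    (taylor : ∀ D ⊆ A, HasSum (fun j ↦ c j * weightBelow s v D ^ (j + 2))
      (g D - p + q * weightBelow s v D)) :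
    HasSum (fun j ↦ c j * coveringSum s v A (j + 2))
      (∑ D ∈ A.powerset, (-1) ^ #(A \ D) * g D + q * v A) := by
  have alternating := hasSum_sum fun D (hD : D ∈ A.powerset) ↦
    (taylor D (Finset.mem_powerset.1 hD)).mul_left ((-1) ^ #(A \ D))
  have sum_signs : ∑ D ∈ A.powerset, (-1 : R) ^ #(A \ D) = 0 := by
    simpa [hA.symm] using sum_neg_one_pow_card_sdiff_filter_superset (R := R) A ∅
  have sum_weights := sum_neg_one_pow_card_sdiff_mul_weightBelow s v A
  rw [if_pos hAs] at sum_weights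
  convert! alternating using 1
  · funext j
    simp_rw [← sum_neg_one_pow_card_sdiff_mul_weightBelow_pow, Finset.mul_sum, mul_left_comm]
  · simp_rw [mul_add, mul_sub, mul_left_comm _ q, Finset.sum_add_distrib, Finset.sum_sub_distrib,
      ← Finset.mul_sum, ← Finset.sum_mul]
    rw [sum_signs, sum_weights, zero_mul, sub_zero]

end CommRing

theorem coveringSum_powerset_erase_empty [CommSemiring R] (N : Finset α) (v : Finset α → R)
    (A : Finset α) (j : ℕ) :
    coveringSum (N.powerset.erase ∅) v A j =
      ∑ f : Fin j → {C // C ∈ N.powerset} with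
        (∀ i, (f i : Finset α) ≠ ∅) ∧ Finset.univ.biUnion (fun i ↦ (f i : Finset α)) = A,
        ∏ i, v (f i) := by
  symm
  refine Finset.sum_nbij (fun f i ↦ (f i : Finset α)) ?_ ?_ ?_ fun _ _ ↦ rfl
  · intro f hf
    simp only [Finset.mem_filter, Finset.mem_univ, true_and] at hf
    exact Finset.mem_filter.2
      ⟨Fintype.mem_piFinset.2 fun i ↦ Finset.mem_erase.2 ⟨hf.1 i, (f i).2⟩, hf.2⟩
  · exact fun f _ g _ h ↦ funext fun i ↦ Subtype.ext (congrFun h i)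
  · intro C hC
    simp only [Finset.coe_filter, Set.mem_ofPred_eq, Fintype.mem_piFinset, Finset.mem_erase] at hC
    exact ⟨fun i ↦ ⟨C i, (hC.1 i).2⟩, by simpa [hC.2] using fun i ↦ (hC.1 i).1, rfl⟩

end CoveringSum

theorem exp_neg_sub_one_add_nonneg (x : ℝ) : 0 ≤ Real.exp (-x) - 1 + x := by
  linarith [Real.one_sub_le_exp_neg x]

theorem exp_neg_sub_one_add_le_min {x : ℝ} (hx : 0 ≤ x) :
    Real.exp (-x) - 1 + x ≤ min x (x ^ 2) := by
  have le_self : Real.exp (-x) - 1 + x ≤ x := by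
    linarith [Real.exp_le_one_iff.2 (neg_nonpos.2 hx)]
  refine le_min le_self ?_
  rcases le_total x 1 with hx1 | hx1
  · have := Real.abs_exp_sub_one_sub_id_le (x := -x) (by rwa [abs_neg, abs_of_nonneg hx])
    linarith [le_abs_self (Real.exp (-x) - 1 - -x), neg_sq x]
  · exact le_self.trans (le_self_pow₀ hx1 two_ne_zero)

theorem hasSum_pow_div_factorial_add_two (x : ℝ) :
    HasSum (fun j : ℕ ↦ x ^ (j + 2) / (j + 2).factorial) (Real.exp x - 1 - x) := by
  have exp_series := NormedSpace.expSeries_div_hasSum_exp x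
  rw [← Real.exp_eq_exp_ℝ, ← hasSum_nat_add_iff' 2] at exp_series
  simpa [Finset.sum_range_succ, sub_sub] using exp_series

theorem hasSum_integral_of_nonneg {Ω ι : Type*} [MeasurableSpace Ω] [Countable ι] {μ : Measure Ω}
    {F : ι → Ω → ℝ} {f : Ω → ℝ} (hF_meas : ∀ i, AEStronglyMeasurable (F i) μ)
    (hF_nonneg : ∀ i, 0 ≤ᵐ[μ] F i) (hf : Integrable f μ)
    (hF_sum : ∀ᵐ x ∂μ, HasSum (fun i ↦ F i x) (f x)) :
    HasSum (fun i ↦ ∫ x, F i x ∂μ) (∫ x, f x ∂μ) := by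
  refine hasSum_integral_of_dominated_convergence F hF_meas (fun i ↦ ?_)
    (hF_sum.mono fun _ hx ↦ hx.summable) (hf.congr ?_) hF_sum
  · exact (hF_nonneg i).mono fun x hx ↦ (Real.norm_of_nonneg hx).le
  · exact hF_sum.mono fun _ hx ↦ hx.tsum_eq.symm

section BranchingMechanism

/-- The branching mechanism `ψ` with drift `a₁`, diffusion coefficient `a₂` and Lévy measure `π`. -/
noncomputable def branchingMechanism (a₁ a₂ : ℝ) (π : Measure ℝ) (l : ℝ) : ℝ :=
  a₁ * l + a₂ * l ^ 2 + ∫ r in Set.Ioi (0 : ℝ), (Real.exp (-l * r) - 1 + l * r) ∂π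

/-- The formula for `ψ'` obtained by differentiating the branching mechanism under the integral. -/
noncomputable def branchingMechanismDeriv (a₁ a₂ : ℝ) (π : Measure ℝ) (l : ℝ) : ℝ :=
  a₁ + 2 * a₂ * l + ∫ r in Set.Ioi (0 : ℝ), r * (1 - Real.exp (-l * r)) ∂π

/-- The coefficient `b(j, l)`, which for `j ≥ 2` is `(-1) ^ j` times the `j`-th derivative of the
branching mechanism at `l > 0`. -/
noncomputable def branchingCoeff (a₂ : ℝ) (π : Measure ℝ) (j : ℕ) (l : ℝ) : ℝ :=
  2 * a₂ * (if j = 2 then 1 else 0) + ∫ r in Set.Ioi (0 : ℝ), r ^ j * Real.exp (-l * r) ∂π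

variable {π : Measure ℝ} {l w : ℝ}

theorem integrableOn_min_self_sq
    (hπ : ∫⁻ r in Set.Ioi (0 : ℝ), ENNReal.ofReal (min r (r ^ 2)) ∂π < ⊤) :
    IntegrableOn (fun r ↦ min r (r ^ 2)) (Set.Ioi 0) π := by
  refine ⟨by fun_prop, (hasFiniteIntegral_iff_ofReal ?_).2 hπ⟩
  filter_upwards [ae_restrict_mem measurableSet_Ioi] with r hr
  exact le_min (le_of_lt hr) (sq_nonneg r)

theorem hasSum_pow_mul_exp_neg (l w r : ℝ) :
    HasSum (fun j : ℕ ↦ r ^ (j + 2) * Real.exp (-l * r) / (j + 2).factorial * w ^ (j + 2))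
      ((Real.exp (-(l - w) * r) - 1 + (l - w) * r) - (Real.exp (-l * r) - 1 + l * r)
        + r * (1 - Real.exp (-l * r)) * w) := by
  have exp_split : Real.exp (-(l - w) * r) = Real.exp (-l * r) * Real.exp (w * r) := by
    rw [← Real.exp_add]
    ring_nf
  convert! (hasSum_pow_div_factorial_add_two (w * r)).mul_left (Real.exp (-l * r)) using 1
  · funext j
    ring
  · rw [exp_split]
    ring

theorem integrableOn_of_le_const_mul_min
    (hπ : IntegrableOn (fun r ↦ min r (r ^ 2)) (Set.Ioi 0) π) {g : ℝ → ℝ}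
    (hg : AEStronglyMeasurable g (π.restrict (Set.Ioi 0))) (c : ℝ)
    (hg_nonneg : ∀ r, 0 < r → 0 ≤ g r) (hg_le : ∀ r, 0 < r → g r ≤ c * min r (r ^ 2)) :
    IntegrableOn g (Set.Ioi 0) π := by
  refine (hπ.const_mul c).mono' hg ?_
  filter_upwards [ae_restrict_mem measurableSet_Ioi] with r hr
  rw [Real.norm_of_nonneg (hg_nonneg r hr)]
  exact hg_le r hr

theorem integrableOn_exp_neg_sub_one_add
    (hπ : IntegrableOn (fun r ↦ min r (r ^ 2)) (Set.Ioi 0) π) (hl : 0 ≤ l) :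
    IntegrableOn (fun r ↦ Real.exp (-l * r) - 1 + l * r) (Set.Ioi 0) π := by
  simp_rw [neg_mul]
  refine integrableOn_of_le_const_mul_min hπ (by fun_prop) (max l (l ^ 2))
    (fun r _ ↦ exp_neg_sub_one_add_nonneg (l * r)) fun r hr ↦ ?_
  have bound := le_min_iff.1 (exp_neg_sub_one_add_le_min (mul_nonneg hl hr.le))
  rw [mul_min_of_nonneg _ _ (hl.trans (le_max_left _ _))]
  refine le_min (bound.1.trans ?_) (bound.2.trans ?_)
  · gcongr
    exact le_max_left _ _
  · rw [mul_pow]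
    gcongr
    exact le_max_right _ _

theorem integrableOn_mul_one_sub_exp_neg
    (hπ : IntegrableOn (fun r ↦ min r (r ^ 2)) (Set.Ioi 0) π) (hl : 0 ≤ l) :
    IntegrableOn (fun r ↦ r * (1 - Real.exp (-l * r))) (Set.Ioi 0) π := by
  refine integrableOn_of_le_const_mul_min hπ (by fun_prop) (max 1 l) (fun r hr ↦ ?_) fun r hr ↦ ?_
  · have : Real.exp (-l * r) ≤ 1 := Real.exp_le_one_iff.2 (by nlinarith)
    exact mul_nonneg hr.le (by linarith)
  · have le_one : 1 - Real.exp (-l * r) ≤ 1 := by linarith [Real.exp_pos (-l * r)]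
    have le_mul : 1 - Real.exp (-l * r) ≤ l * r := by linarith [Real.add_one_le_exp (-l * r)]
    rw [mul_min_of_nonneg _ _ (zero_le_one.trans (le_max_left _ _))]
    refine le_min ?_ ?_
    · calc r * (1 - Real.exp (-l * r)) ≤ r * max 1 l := by
            gcongr
            exact le_one.trans (le_max_left _ _)
        _ = max 1 l * r := mul_comm _ _
    · calc r * (1 - Real.exp (-l * r)) ≤ r * (max 1 l * r) := by
            gcongr
            exact le_mul.trans (by gcongr; exact le_max_right _ _)
        _ = max 1 l * r ^ 2 := by ring

theorem hasSum_integral_pow_mul_exp_neg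
    (hπ : IntegrableOn (fun r ↦ min r (r ^ 2)) (Set.Ioi 0) π) (hw : 0 ≤ w) (hwl : w ≤ l) :
    HasSum (fun j : ℕ ↦ (∫ r in Set.Ioi (0 : ℝ), r ^ (j + 2) * Real.exp (-l * r) ∂π) /
        (j + 2).factorial * w ^ (j + 2))
      ((∫ r in Set.Ioi (0 : ℝ), (Real.exp (-(l - w) * r) - 1 + (l - w) * r) ∂π)
        - (∫ r in Set.Ioi (0 : ℝ), (Real.exp (-l * r) - 1 + l * r) ∂π)
        + (∫ r in Set.Ioi (0 : ℝ), r * (1 - Real.exp (-l * r)) ∂π) * w) := by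
  have integrable_shifted := integrableOn_exp_neg_sub_one_add hπ (sub_nonneg.2 hwl)
  have integrable_base := integrableOn_exp_neg_sub_one_add hπ (hw.trans hwl)
  have integrable_deriv := (integrableOn_mul_one_sub_exp_neg hπ (hw.trans hwl)).mul_const w
  have exchanged := hasSum_integral_of_nonneg (μ := π.restrict (Set.Ioi 0))
    (fun j ↦ Continuous.aestronglyMeasurable (by fun_prop))
    (fun j ↦ by
      filter_upwards [ae_restrict_mem measurableSet_Ioi] with r (hr : 0 < r)
      simp only [Pi.zero_apply]
      positivity)
    ((integrable_shifted.sub integrable_base).add integrable_deriv)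
    (.of_forall (hasSum_pow_mul_exp_neg l w))
  simpa only [integral_add' (integrable_shifted.sub integrable_base) integrable_deriv,
    integral_sub' integrable_shifted integrable_base, integral_mul_const, integral_div]
    using exchanged

theorem hasSum_branchingCoeff_mul_pow
    (hπ : IntegrableOn (fun r ↦ min r (r ^ 2)) (Set.Ioi 0) π) (a₁ a₂ : ℝ)
    (hw : 0 ≤ w) (hwl : w ≤ l) :
    HasSum (fun j : ℕ ↦ branchingCoeff a₂ π (j + 2) l / (j + 2).factorial * w ^ (j + 2))
      (branchingMechanism a₁ a₂ π (l - w) - branchingMechanism a₁ a₂ π l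
        + branchingMechanismDeriv a₁ a₂ π l * w) := by
  convert! (hasSum_ite_eq (0 : ℕ) (a₂ * w ^ 2)).add (hasSum_integral_pow_mul_exp_neg hπ hw hwl)
    using 1
  · funext j
    rcases j with _ | j
    · simp only [branchingCoeff, zero_add, if_true, Nat.factorial_two, Nat.cast_ofNat]
      ring
    · simp [branchingCoeff]
  · simp only [branchingMechanism, branchingMechanismDeriv]
    ring

theorem hasSum_branchingCoeff_mul_coveringSum {α : Type*} [DecidableEq α]
    (hπ : IntegrableOn (fun r ↦ min r (r ^ 2)) (Set.Ioi 0) π) (a₁ a₂ : ℝ)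
    {s : Finset (Finset α)} {v : Finset α → ℝ} {N A : Finset α} (hne : ∅ ∉ s)
    (hsub : ∀ C ∈ s, C ⊆ N) (hv : ∀ C ∈ s, 0 ≤ v C) (hA : A ∈ s) :
    HasSum (fun j : ℕ ↦ branchingCoeff a₂ π (j + 2) (weightMeeting s v N) / (j + 2).factorial *
        coveringSum s v A (j + 2))
      (∑ D ∈ A.powerset, (-1) ^ #(A \ D) *
          branchingMechanism a₁ a₂ π (weightMeeting s v (N \ D))
        + branchingMechanismDeriv a₁ a₂ π (weightMeeting s v N) * v A) := by
  refine hasSum_mul_coveringSum (p := branchingMechanism a₁ a₂ π (weightMeeting s v N)) hA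
    (ne_of_mem_of_not_mem hA hne) fun D _ ↦ ?_
  have below_nonneg : 0 ≤ weightBelow s v D :=
    Finset.sum_nonneg fun C hC ↦ hv C (Finset.mem_of_mem_filter C hC)
  have meeting_nonneg : 0 ≤ weightMeeting s v (N \ D) :=
    Finset.sum_nonneg fun C hC ↦ hv C (Finset.mem_of_mem_filter C hC)
  rw [weightMeeting_sdiff hne hsub] at meeting_nonneg ⊢
  exact hasSum_branchingCoeff_mul_pow hπ a₁ a₂ below_nonneg (sub_nonneg.1 meeting_nonneg)

end BranchingMechanism

theorem stmt11_general {α : Type*} [DecidableEq α]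
    (a₁ a₂ : ℝ) (π : Measure ℝ)
    (hπ : (∫⁻ r in Set.Ioi (0 : ℝ), ENNReal.ofReal (min r (r ^ 2)) ∂π) < ⊤)
    (ψ dψ : ℝ → ℝ) (b : ℕ → ℝ → ℝ)
    (hψ : ∀ l : ℝ, 0 ≤ l → ψ l = a₁ * l + a₂ * l ^ 2 +
        ∫ r in Set.Ioi (0 : ℝ), (Real.exp (-l * r) - 1 + l * r) ∂π)
    (hdψ : ∀ l : ℝ, 0 < l → dψ l = a₁ + 2 * a₂ * l +
        ∫ r in Set.Ioi (0 : ℝ), r * (1 - Real.exp (-l * r)) ∂π)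
    (hb : ∀ j : ℕ, 2 ≤ j → ∀ l : ℝ, 0 < l → b j l =
        2 * a₂ * (if j = 2 then 1 else 0) +
          ∫ r in Set.Ioi (0 : ℝ), r ^ j * Real.exp (-l * r) ∂π)
    (N : Finset α) (v : Finset α → ℝ)
    (hv : ∀ C : Finset α, C ⊆ N → C ≠ ∅ → 0 ≤ v C)
    (u : Finset α → ℝ)
    (hu : ∀ B : Finset α, u B =
        ∑ C ∈ N.powerset.filter (fun C => C ≠ ∅ ∧ (C ∩ B).Nonempty), v C)
    (huN : 0 < u N)
    (A : Finset α) (hA : A ⊆ N) (hAne : A ≠ ∅)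
    (T : ℕ → ℝ)
    (hT : ∀ j : ℕ, T j =
        ∑ f ∈ (Finset.univ :
            Finset (Fin j → {C : Finset α // C ∈ N.powerset})).filter
          (fun f => (∀ i, (f i : Finset α) ≠ ∅) ∧
            Finset.univ.biUnion (fun i => ((f i : Finset α))) = A),
        ∏ i, v (f i)) :
    Summable (fun j : ℕ =>
      |b (j + 2) (u N) / (Nat.factorial (j + 2) : ℝ) * T (j + 2)|) ∧
    (∑ B ∈ N.powerset.filter (fun B => N \ A ⊆ B),
        (-1 : ℝ) ^ (A.card + B.card + N.card + 1) * ψ (u B)) =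
      dψ (u N) * v A -
        ∑' j : ℕ, b (j + 2) (u N) / (Nat.factorial (j + 2) : ℝ) * T (j + 2) := by
  set s := N.powerset.erase ∅ with hs
  have mem_s {C : Finset α} : C ∈ s ↔ C ≠ ∅ ∧ C ⊆ N := by
    rw [hs, Finset.mem_erase, Finset.mem_powerset]
  have hv_s : ∀ C ∈ s, 0 ≤ v C := fun C hC ↦ hv C (mem_s.1 hC).2 (mem_s.1 hC).1
  have u_eq (B : Finset α) : u B = weightMeeting s v B := by
    rw [hu, weightMeeting, hs, ← Finset.filter_ne', Finset.filter_filter]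
  have T_eq (j : ℕ) : T j = coveringSum s v A j := by
    rw [hT, coveringSum_powerset_erase_empty]
  have ψ_eq (B : Finset α) : ψ (u B) = branchingMechanism a₁ a₂ π (weightMeeting s v B) := by
    rw [u_eq]
    exact hψ _ (Finset.sum_nonneg fun C hC ↦ hv_s C (Finset.mem_of_mem_filter C hC))
  have dψ_eq : dψ (u N) = branchingMechanismDeriv a₁ a₂ π (weightMeeting s v N) := by
    rw [← u_eq]
    exact hdψ _ huN
  have b_eq (j : ℕ) : b (j + 2) (u N) = branchingCoeff a₂ π (j + 2) (weightMeeting s v N) := by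
    rw [← u_eq]
    exact hb _ (Nat.le_add_left 2 j) _ huN
  have series := hasSum_branchingCoeff_mul_coveringSum (integrableOn_min_self_sq hπ) a₁ a₂
    (fun h ↦ (mem_s.1 h).1 rfl) (fun C hC ↦ (mem_s.1 hC).2) hv_s (mem_s.2 ⟨hAne, hA⟩)
  simp_rw [← b_eq, ← T_eq, ← ψ_eq, ← dψ_eq] at series
  refine ⟨series.summable.abs, ?_⟩
  rw [series.tsum_eq, sum_neg_one_pow_filter_sdiff_subset hA (fun B ↦ ψ (u B))]
  ring

theorem stmt11 {α : Type*} [DecidableEq α]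
    (a₁ a₂ : ℝ) (ha₁ : 0 ≤ a₁) (ha₂ : 0 ≤ a₂)
    (π : Measure ℝ)
    (hπ : (∫⁻ r in Set.Ioi (0 : ℝ), ENNReal.ofReal (min r (r ^ 2)) ∂π) < ⊤)
    (ψ dψ : ℝ → ℝ) (b : ℕ → ℝ → ℝ)
    (hψ : ∀ l : ℝ, 0 ≤ l → ψ l = a₁ * l + a₂ * l ^ 2 +
        ∫ r in Set.Ioi (0 : ℝ), (Real.exp (-l * r) - 1 + l * r) ∂π)
    (hdψ : ∀ l : ℝ, 0 < l → dψ l = a₁ + 2 * a₂ * l +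
        ∫ r in Set.Ioi (0 : ℝ), r * (1 - Real.exp (-l * r)) ∂π)
    (hb : ∀ j : ℕ, 2 ≤ j → ∀ l : ℝ, 0 < l → b j l =
        2 * a₂ * (if j = 2 then 1 else 0) +
          ∫ r in Set.Ioi (0 : ℝ), r ^ j * Real.exp (-l * r) ∂π)
    (N : Finset α) (v : Finset α → ℝ)
    (hv : ∀ C : Finset α, C ⊆ N → C ≠ ∅ → 0 ≤ v C)
    (u : Finset α → ℝ)
    (hu : ∀ B : Finset α, u B =
        ∑ C ∈ N.powerset.filter (fun C => C ≠ ∅ ∧ (C ∩ B).Nonempty), v C)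
    (huN : 0 < u N)
    (A : Finset α) (hA : A ⊆ N) (hAne : A ≠ ∅)
    (T : ℕ → ℝ)
    (hT : ∀ j : ℕ, T j =
        ∑ f ∈ (Finset.univ :
            Finset (Fin j → {C : Finset α // C ∈ N.powerset})).filter
          (fun f => (∀ i, (f i : Finset α) ≠ ∅) ∧
            Finset.univ.biUnion (fun i => ((f i : Finset α))) = A),
        ∏ i, v (f i)) :
    Summable (fun j : ℕ =>
      |b (j + 2) (u N) / (Nat.factorial (j + 2) : ℝ) * T (j + 2)|) ∧
    (∑ B ∈ N.powerset.filter (fun B => N \ A ⊆ B),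
        (-1 : ℝ) ^ (A.card + B.card + N.card + 1) * ψ (u B)) =
      dψ (u N) * v A -
        ∑' j : ℕ, b (j + 2) (u N) / (Nat.factorial (j + 2) : ℝ) * T (j + 2) :=
  stmt11_general a₁ a₂ π hπ ψ dψ b hψ hdψ hb N v hv u hu huN A hA hAne T hT
end

section
/- Let N be a nonempty finite set, let a_C ≥ 0 be given for each nonempty C ⊆ N, and set b_A = ∑_{∅ ≠ C ⊆ N, C ∩ A ≠ ∅} a_C for each A ⊆ N (so b_∅ = 0). Then e^{-b_N} ∑_{m=1}^∞ (1/m!) ∑_{(C₁,…,C_m)} ∏_{i=1}^m a_{C_i} = ∑_{A ⊆ N} (-1)^{|A|} e^{-b_A}, where the inner sum ranges over all ordered m-tuples (C₁,…,C_m) of nonempty subsets of N with C₁ ∪ ⋯ ∪ C_m = N, and the series over m converges absolutely. -/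
open Finset

/-!
For a set `A`, the tuples all of whose blocks avoid `A` have total weight `w_A ^ m`, where `w_A` is
the total weight of the single blocks avoiding `A`. Inclusion–exclusion over the set of missed
points therefore gives `∑_{A ⊆ N} (-1)^|A| w_A ^ m` for the weight of the covering `m`-tuples.
Summing against `1 / m!` turns each power into `exp w_A`, and `w_A = b_N - b_A` when every block is
a nonempty subset of `N`.
-/

section Covering

variable {ι α R : Type*} [Fintype ι] [DecidableEq α]

/-- The `m`-tuples of indices whose blocks `c (f i)` jointly cover `N`. The blocks may stick out of
`N`, so that covering is the inclusion `N ⊆ ⋃ i, c (f i)`. -/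
def coveringTuples (c : ι → Finset α) (N : Finset α) (m : ℕ) : Finset (Fin m → ι) :=
  {f | N ⊆ univ.biUnion fun i => c (f i)}

theorem coveringTuples_zero (c : ι → Finset α) {N : Finset α} (hN : N.Nonempty) :
    coveringTuples c N 0 = ∅ := by
  simp [coveringTuples, hN.ne_empty]

theorem coveringTuples_eq_inf_compl [DecidableEq ι] (c : ι → Finset α) (N : Finset α) (m : ℕ) :
    coveringTuples c N m =
      N.inf fun x => (Fintype.piFinset fun _ : Fin m => ({j | x ∉ c j} : Finset ι))ᶜ := by
  ext f
  simp [coveringTuples, mem_inf, subset_iff]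

theorem inf_piFinset_notMem [DecidableEq ι] (c : ι → Finset α) (A : Finset α) (m : ℕ) :
    (A.inf fun x => Fintype.piFinset fun _ : Fin m => ({j | x ∉ c j} : Finset ι)) =
      Fintype.piFinset fun _ : Fin m => ({j | Disjoint (c j) A} : Finset ι) := by
  ext f
  simp only [mem_inf, Fintype.mem_piFinset, mem_filter_univ, disjoint_right]
  exact ⟨fun h i x hx => h x hx i, fun h x hx i => h i hx⟩

theorem sum_coveringTuples_prod [CommRing R] (c : ι → Finset α) (w : ι → R) (N : Finset α)
    (m : ℕ) :
    ∑ f ∈ coveringTuples c N m, ∏ i, w (f i) =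
      ∑ A ∈ N.powerset, (-1) ^ #A * (∑ j with Disjoint (c j) A, w j) ^ m := by
  classical
  rw [coveringTuples_eq_inf_compl, inclusion_exclusion_sum_inf_compl]
  refine sum_congr rfl fun A _ => ?_
  rw [inf_piFinset_notMem, sum_pow', zsmul_eq_mul, Int.cast_pow, Int.cast_neg, Int.cast_one]

end Covering

section PowersetBlocks

variable {α R : Type*} [DecidableEq α]

-- Giving the empty block weight zero trades the constraint `C ≠ ∅` for the weight `update a ∅ 0`.
theorem sum_prod_nonempty_cover_eq_sum_coveringTuples [CommSemiring R] (a : Finset α → R)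
    (N : Finset α) (m : ℕ) :
    ∑ f : Fin m → {C : Finset α // C ∈ N.powerset} with
        (∀ i, (f i : Finset α) ≠ ∅) ∧ univ.biUnion (fun i => (f i : Finset α)) = N,
      ∏ i, a (f i) =
    ∑ f ∈ coveringTuples (Subtype.val : {C // C ∈ N.powerset} → Finset α) N m,
      ∏ i, Function.update a ∅ 0 (f i) := by
  have cover_iff (f : Fin m → {C : Finset α // C ∈ N.powerset}) :
      univ.biUnion (fun i => (f i : Finset α)) = N ↔ N ⊆ univ.biUnion fun i => (f i : Finset α) :=
    have union_subset : univ.biUnion (fun i => (f i : Finset α)) ⊆ N :=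
      biUnion_subset.2 fun i _ => mem_powerset.1 (f i).2
    ⟨fun h => h.ge, union_subset.antisymm⟩
  have prod_update (f : Fin m → {C : Finset α // C ∈ N.powerset}) :
      ∏ i, Function.update a ∅ 0 (f i) =
        if ∀ i, (f i : Finset α) ≠ ∅ then ∏ i, a (f i) else 0 := by
    simpa only [Function.update_apply, ite_not, mem_univ, true_implies] using
      prod_ite_zero (s := univ) (p := fun i => (f i : Finset α) ≠ ∅) (f := fun i => a (f i))
  simp only [coveringTuples, prod_update, cover_iff, ← sum_filter, filter_filter, and_comm]

theorem sum_update_disjoint_eq_sub [AddCommGroup R] (a : Finset α → R) (N A : Finset α) :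
    ∑ C : N.powerset with Disjoint C.val A, Function.update a ∅ 0 C =
      ∑ C ∈ N.powerset with C ≠ ∅ ∧ (C ∩ N).Nonempty, a C -
        ∑ C ∈ N.powerset with C ≠ ∅ ∧ (C ∩ A).Nonempty, a C := by
  rw [sum_filter,
    sum_coe_sort N.powerset fun C => if Disjoint C A then Function.update a ∅ 0 C else 0,
    sum_filter, sum_filter, ← sum_sub_distrib]
  refine sum_congr rfl fun C hC => ?_
  rw [inter_eq_left.2 (mem_powerset.1 hC)]
  obtain rfl | hne := C.eq_empty_or_nonempty
  · simp
  · by_cases hCA : Disjoint C A <;>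
      simp [hne, hne.ne_empty, hCA, ← not_disjoint_iff_nonempty_inter]

end PowersetBlocks

section ExpSeries

open NormedSpace Nat

variable {κ 𝔸 : Type*} [NormedCommRing 𝔸] [NormedAlgebra ℚ 𝔸]

theorem inv_factorial_smul_sum_mul_pow (s : Finset κ) (u x : κ → 𝔸) (m : ℕ) :
    (m ! : ℚ)⁻¹ • ∑ k ∈ s, u k * x k ^ m = ∑ k ∈ s, u k * ((m ! : ℚ)⁻¹ • x k ^ m) := by
  simp only [smul_sum, mul_smul_comm]

theorem summable_norm_inv_factorial_smul_sum_mul_pow (s : Finset κ) (u x : κ → 𝔸) :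
    Summable fun m : ℕ => ‖(m ! : ℚ)⁻¹ • ∑ k ∈ s, u k * x k ^ m‖ := by
  have bound_summable : Summable fun m : ℕ => ∑ k ∈ s, ‖u k‖ * ‖(m ! : ℚ)⁻¹ • x k ^ m‖ :=
    summable_sum fun k _ => (norm_expSeries_summable' (x k)).mul_left _
  refine bound_summable.of_nonneg_of_le (fun _ => norm_nonneg _) fun m => ?_
  rw [inv_factorial_smul_sum_mul_pow]
  exact norm_sum_le_of_le s fun k _ => norm_mul_le _ _

theorem hasSum_inv_factorial_smul_sum_mul_pow [CompleteSpace 𝔸] (s : Finset κ) (u x : κ → 𝔸) :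
    HasSum (fun m : ℕ => (m ! : ℚ)⁻¹ • ∑ k ∈ s, u k * x k ^ m) (∑ k ∈ s, u k * exp (x k)) := by
  simp only [inv_factorial_smul_sum_mul_pow]
  exact hasSum_sum fun k _ => (exp_series_hasSum_exp' (x k)).mul_left _

end ExpSeries

open NormedSpace in
theorem stmt13_general {α 𝔸 : Type*} [DecidableEq α] [NormedCommRing 𝔸] [NormedAlgebra ℚ 𝔸]
    [CompleteSpace 𝔸] (N : Finset α) (hN : N ≠ ∅) (a b : Finset α → 𝔸)
    (hb : ∀ A : Finset α, b A = ∑ C ∈ N.powerset with C ≠ ∅ ∧ (C ∩ A).Nonempty, a C)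
    (S : ℕ → 𝔸)
    (hS : ∀ m : ℕ, S m =
      ∑ f : Fin m → {C : Finset α // C ∈ N.powerset} with
        (∀ i, (f i : Finset α) ≠ ∅) ∧ univ.biUnion (fun i => (f i : Finset α)) = N,
      ∏ i, a (f i)) :
    Summable (fun m : ℕ => ‖((m + 1).factorial : ℚ)⁻¹ • S (m + 1)‖) ∧
    exp (-b N) * ∑' m : ℕ, ((m + 1).factorial : ℚ)⁻¹ • S (m + 1) =
      ∑ A ∈ N.powerset, (-1) ^ #A * exp (-b A) := by
  have S_eq (m : ℕ) : S m = ∑ A ∈ N.powerset, (-1) ^ #A * (b N - b A) ^ m := by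
    rw [hS, sum_prod_nonempty_cover_eq_sum_coveringTuples,
      sum_coveringTuples_prod _ fun C : N.powerset => Function.update a ∅ 0 C]
    simp only [hb, sum_update_disjoint_eq_sub]
  have S_zero : S 0 = 0 := by
    rw [hS, sum_prod_nonempty_cover_eq_sum_coveringTuples,
      coveringTuples_zero _ (nonempty_iff_ne_empty.2 hN), sum_empty]
  have norm_summable : Summable fun m : ℕ => ‖(m.factorial : ℚ)⁻¹ • S m‖ := by
    simpa only [S_eq] using summable_norm_inv_factorial_smul_sum_mul_pow _ _ _
  have hasSum_S : HasSum (fun m : ℕ => (m.factorial : ℚ)⁻¹ • S m)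
      (∑ A ∈ N.powerset, (-1) ^ #A * exp (b N - b A)) := by
    simpa only [S_eq] using hasSum_inv_factorial_smul_sum_mul_pow _ _ _
  have hasSum_succ := (hasSum_nat_add_iff' 1).2 hasSum_S
  simp only [sum_range_one, S_zero, smul_zero, sub_zero] at hasSum_succ
  refine ⟨(summable_nat_add_iff 1).2 norm_summable, ?_⟩
  rw [hasSum_succ.tsum_eq, mul_sum]
  refine sum_congr rfl fun A _ => ?_
  rw [mul_left_comm, ← exp_add]
  congr 2
  abel

theorem stmt13 {α : Type*} [DecidableEq α] (N : Finset α) (hN : N ≠ ∅)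
    (a : Finset α → ℝ) (ha : ∀ C : Finset α, C ⊆ N → C ≠ ∅ → 0 ≤ a C)
    (b : Finset α → ℝ)
    (hb : ∀ A : Finset α, b A =
        ∑ C ∈ N.powerset.filter (fun C => C ≠ ∅ ∧ (C ∩ A).Nonempty), a C)
    (S : ℕ → ℝ)
    (hS : ∀ m : ℕ, S m =
        ∑ f ∈ (Finset.univ :
            Finset (Fin m → {C : Finset α // C ∈ N.powerset})).filter
          (fun f => (∀ i, (f i : Finset α) ≠ ∅) ∧
            Finset.univ.biUnion (fun i => ((f i : Finset α))) = N),
        ∏ i, a (f i)) :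
    Summable (fun m : ℕ => |(1 / (Nat.factorial (m + 1) : ℝ)) * S (m + 1)|) ∧
    Real.exp (-(b N)) * ∑' m : ℕ, (1 / (Nat.factorial (m + 1) : ℝ)) * S (m + 1) =
      ∑ A ∈ N.powerset, (-1 : ℝ) ^ A.card * Real.exp (-(b A)) := by
  simpa only [Rat.smul_def, Rat.cast_inv, Rat.cast_natCast, Real.norm_eq_abs, one_div,
    Real.exp_eq_exp_ℝ] using stmt13_general N hN a b hb S hS
end

section
/- Let λ₀ > 0, let m_j ≥ 0 for integers j ≥ 2 be such that ψ̃(u) = ∑_{j=2}^∞ m_j u^j / j! converges for every u with 0 ≤ u < λ₀, and let K > 0. Let (c_n)_{n≥1} be nonnegative reals with c₁ ≤ 1 satisfying, for every n ≥ 2, c_n ≤ K ∑_{j=2}^n (m_j/j!) ∑_{(i₁,…,i_j)} (n!/(i₁!⋯i_j!)) ∏_{k=1}^j c_{i_k}, where the inner sum ranges over all ordered j-tuples of positive integers with i₁ + ⋯ + i_j = n. Then there exists λ > 0 such that ∑_{n=1}^∞ c_n λ^n / n! < ∞. -/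
open Finset

/-!
Put `b n = c n / n!` and `a j = K * m j / j!`. The recurrence says that the formal series
`B(x) = ∑ b n x ^ n` is dominated coefficientwise by `b 1 x + A(B(x))`, where
`A(u) = ∑_{j ≥ 2} a j u ^ j`. Since `A` has no constant or linear term, `∑ |a j| s ^ j ≤ s / 2` for
some small `s > 0`; choose `r` with `b 1 * r ≤ s / 2`. All parts of a composition of `n ≤ N + 1`
into at least two parts are at most `N`, so the partial sums `B_N(r)` satisfy
`B_{N+1}(r) ≤ b 1 * r + ∑ |a j| B_N(r) ^ j`, and by induction they never exceed `s`.
-/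

section CompositionSum

/-- The sum of `∏ k, b (i k)` over the compositions `i` of `n` into `j` positive parts, that is, the
coefficient of `x ^ n` in `(∑_{l ≥ 1} b l x ^ l) ^ j`. Compositions are encoded as functions
`Fin j → ℕ` with values at least `1`. -/
def compositionSum {R : Type*} [CommSemiring R] (b : ℕ → R) (j n : ℕ) : R :=
  ∑ i ∈ (Finset.Nat.antidiagonalTuple j n).filter (fun i => ∀ k, 1 ≤ i k), ∏ k, b (i k)

lemma apply_add_card_le_sum_add_one {ι : Type*} [Fintype ι] {i : ι → ℕ} (hi : ∀ k, 1 ≤ i k)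
    (k : ι) : i k + Fintype.card ι ≤ ∑ l, i l + 1 := by
  classical
  have hsplit : i k + ∑ l ∈ univ.erase k, i l = ∑ l, i l := add_sum_erase _ _ (mem_univ k)
  have hrest : #(univ.erase k) ≤ ∑ l ∈ univ.erase k, i l := by
    simpa using card_nsmul_le_sum (univ.erase k) i 1 fun l _ => hi l
  rw [card_erase_of_mem (mem_univ k), card_univ] at hrest
  lia

lemma compositionSum_mul_pow {R : Type*} [CommSemiring R] (b : ℕ → R) (r : R) (j n : ℕ) :
    compositionSum (fun l => b l * r ^ l) j n = compositionSum b j n * r ^ n := by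
  rw [compositionSum, compositionSum, sum_mul]
  refine sum_congr rfl fun i hi => ?_
  have hsum : ∑ k, i k = n := Finset.Nat.mem_antidiagonalTuple.1 (mem_filter.1 hi).1
  rw [prod_mul_distrib, prod_pow_eq_pow_sum, hsum]

lemma compositionSum_div_factorial {F : Type*} [Field F] [CharZero F] (c : ℕ → F) (j n : ℕ) :
    compositionSum (fun l => c l / (l.factorial : F)) j n =
      (∑ i ∈ (Finset.Nat.antidiagonalTuple j n).filter (fun i => ∀ k, 1 ≤ i k),
        ((n.factorial : F) / ∏ k, ((i k).factorial : F)) * ∏ k, c (i k)) / (n.factorial : F) := by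
  have hn : (n.factorial : F) ≠ 0 := Nat.cast_ne_zero.2 n.factorial_ne_zero
  rw [compositionSum, sum_div]
  refine sum_congr rfl fun i _ => ?_
  rw [prod_div_distrib]
  field_simp

section Ordered

variable {R : Type*} [CommSemiring R] [PartialOrder R] [IsOrderedRing R] {b : ℕ → R}

lemma compositionSum_nonneg (hb : ∀ n, 1 ≤ n → 0 ≤ b n) (j n : ℕ) : 0 ≤ compositionSum b j n :=
  sum_nonneg fun _ hi => prod_nonneg fun k _ => hb _ ((mem_filter.1 hi).2 k)

lemma sum_compositionSum_le_pow (hb : ∀ n, 1 ≤ n → 0 ≤ b n) {N j : ℕ} {s : Finset ℕ}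
    (hs : ∀ n ∈ s, n + 1 ≤ N + j) :
    ∑ n ∈ s, compositionSum b j n ≤ (∑ l ∈ Icc 1 N, b l) ^ j := by
  simp only [compositionSum]
  rw [sum_pow', ← sum_biUnion]
  · refine sum_le_sum_of_subset_of_nonneg (fun i hi => ?_) fun i hi _ => ?_
    · simp only [mem_biUnion, mem_filter, Finset.Nat.mem_antidiagonalTuple] at hi
      obtain ⟨n, hn, hsum, hpos⟩ := hi
      refine Fintype.mem_piFinset.2 fun k => mem_Icc.2 ⟨hpos k, ?_⟩
      have hpart := apply_add_card_le_sum_add_one hpos k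
      rw [Fintype.card_fin, hsum] at hpart
      have := hs n hn
      lia
    · exact prod_nonneg fun k _ => hb _ (mem_Icc.1 (Fintype.mem_piFinset.1 hi k)).1
  · intro n _ n' _ hne
    refine disjoint_left.2 fun i hi hi' => hne ?_
    simp only [mem_filter, Finset.Nat.mem_antidiagonalTuple] at hi hi'
    exact hi.1.symm.trans hi'.1

end Ordered

end CompositionSum

/-- The coefficientwise inequality `B(x) ≤ b 1 x + ∑_{j ≥ 2} a j B(x) ^ j` for the formal series
`B(x) = ∑_{n ≥ 1} b n x ^ n`. The sum over `j` stops at `n`, which has no composition into more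
than `n` positive parts. -/
def IsCompositionSubsolution (a b : ℕ → ℝ) : Prop :=
  ∀ n, 2 ≤ n → b n ≤ ∑ j ∈ Icc 2 n, a j * compositionSum b j n

namespace IsCompositionSubsolution

variable {a b : ℕ → ℝ}

lemma abs (h : IsCompositionSubsolution a b) (hb : ∀ n, 1 ≤ n → 0 ≤ b n) :
    IsCompositionSubsolution (fun j => |a j|) b := fun n hn =>
  (h n hn).trans <| sum_le_sum fun j _ =>
    mul_le_mul_of_nonneg_right (le_abs_self (a j)) (compositionSum_nonneg hb j n)

lemma mul_pow (h : IsCompositionSubsolution a b) {r : ℝ} (hr : 0 ≤ r) :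
    IsCompositionSubsolution a fun n => b n * r ^ n := fun n hn => by
  simp only [compositionSum_mul_pow, ← mul_assoc, ← sum_mul]
  exact mul_le_mul_of_nonneg_right (h n hn) (pow_nonneg hr n)

lemma sum_Icc_two_le (h : IsCompositionSubsolution a b) (ha : ∀ j, 2 ≤ j → 0 ≤ a j)
    (hb : ∀ n, 1 ≤ n → 0 ≤ b n) (N : ℕ) :
    ∑ n ∈ Icc 2 (N + 1), b n ≤ ∑ j ∈ Icc 2 (N + 1), a j * (∑ l ∈ Icc 1 N, b l) ^ j := by
  calc ∑ n ∈ Icc 2 (N + 1), b n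
      ≤ ∑ n ∈ Icc 2 (N + 1), ∑ j ∈ Icc 2 (N + 1), a j * compositionSum b j n := by
        refine sum_le_sum fun n hn => ?_
        obtain ⟨hn2, hnN⟩ := mem_Icc.1 hn
        refine (h n hn2).trans (sum_le_sum_of_subset_of_nonneg (Icc_subset_Icc_right hnN) ?_)
        exact fun j hj _ => mul_nonneg (ha j (mem_Icc.1 hj).1) (compositionSum_nonneg hb j n)
    _ = ∑ j ∈ Icc 2 (N + 1), a j * ∑ n ∈ Icc 2 (N + 1), compositionSum b j n := by
        rw [sum_comm]
        simp only [mul_sum]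
    _ ≤ ∑ j ∈ Icc 2 (N + 1), a j * (∑ l ∈ Icc 1 N, b l) ^ j := by
        refine sum_le_sum fun j hj => ?_
        have hj2 : 2 ≤ j := (mem_Icc.1 hj).1
        refine mul_le_mul_of_nonneg_left (sum_compositionSum_le_pow hb fun n hn => ?_) (ha j hj2)
        have := (mem_Icc.1 hn).2
        lia

lemma sum_Icc_one_le (h : IsCompositionSubsolution a b) (ha : ∀ j, 2 ≤ j → 0 ≤ a j)
    (hb : ∀ n, 1 ≤ n → 0 ≤ b n) {s : ℝ} (hs : ∀ N, b 1 + ∑ j ∈ Icc 2 N, a j * s ^ j ≤ s) (N : ℕ) :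
    ∑ n ∈ Icc 1 N, b n ≤ s := by
  induction N with
  | zero => simpa using (hb 1 le_rfl).trans (by simpa using hs 0)
  | succ N ih =>
    have hpartial : 0 ≤ ∑ n ∈ Icc 1 N, b n := sum_nonneg fun n hn => hb n (mem_Icc.1 hn).1
    calc ∑ n ∈ Icc 1 (N + 1), b n
        = b 1 + ∑ n ∈ Icc 2 (N + 1), b n := (add_sum_Ioc_eq_sum_Icc (by lia)).symm
      _ ≤ b 1 + ∑ j ∈ Icc 2 (N + 1), a j * (∑ n ∈ Icc 1 N, b n) ^ j := by
          grw [h.sum_Icc_two_le ha hb N]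
      _ ≤ b 1 + ∑ j ∈ Icc 2 (N + 1), a j * s ^ j := by
          gcongr with j hj
          exact ha j (mem_Icc.1 hj).1
      _ ≤ s := hs (N + 1)

end IsCompositionSubsolution

lemma exists_pos_sum_abs_mul_pow_le {a : ℕ → ℝ} {v : ℝ} (hv : 0 < v)
    (ha : Summable fun j => a (j + 2) * v ^ (j + 2)) {ε : ℝ} (hε : 0 < ε) :
    ∃ s, 0 < s ∧ ∀ N, ∑ j ∈ Icc 2 N, |a j| * s ^ j ≤ ε * s := by
  have hsummable : Summable fun j => |a (j + 2)| * v ^ j := by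
    refine (ha.abs.div_const (v ^ 2)).congr fun j => ?_
    rw [abs_mul, abs_of_pos (pow_pos hv _), pow_add]
    field_simp
  set M := ∑' j, |a (j + 2)| * v ^ j
  have : 0 ≤ M := tsum_nonneg fun j => by positivity
  refine ⟨min v (ε / (M + 1)), by positivity, fun N => ?_⟩
  set s := min v (ε / (M + 1))
  have hs : 0 < s := by positivity
  have hsv : s ≤ v := min_le_left _ _
  have hsM : s * (M + 1) ≤ ε := (le_div_iff₀ (by positivity)).1 (min_le_right _ _)
  calc ∑ j ∈ Icc 2 N, |a j| * s ^ j
      = s ^ 2 * ∑ j ∈ range (N + 1 - 2), |a (j + 2)| * s ^ j := by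
        rw [← Ico_add_one_right_eq_Icc, sum_Ico_eq_sum_range, mul_sum]
        refine sum_congr rfl fun j _ => ?_
        rw [add_comm 2 j]
        ring
    _ ≤ s ^ 2 * ∑ j ∈ range (N + 1 - 2), |a (j + 2)| * v ^ j := by gcongr
    _ ≤ s ^ 2 * M := by
        gcongr
        exact hsummable.sum_le_tsum _ fun j _ => by positivity
    _ ≤ ε * s := by nlinarith

theorem IsCompositionSubsolution.exists_summable {a b : ℕ → ℝ} (h : IsCompositionSubsolution a b)
    (hb : ∀ n, 1 ≤ n → 0 ≤ b n) {v : ℝ} (hv : 0 < v)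
    (ha : Summable fun j => a (j + 2) * v ^ (j + 2)) :
    ∃ r, 0 < r ∧ Summable fun n => b (n + 1) * r ^ (n + 1) := by
  obtain ⟨s, hs, hA⟩ := exists_pos_sum_abs_mul_pow_le hv ha one_half_pos
  obtain ⟨r, hr, hr1⟩ : ∃ r, 0 < r ∧ b 1 * r ^ 1 ≤ s / 2 := by
    have hb1 : 0 ≤ b 1 := hb 1 le_rfl
    refine ⟨s / 2 / (b 1 + 1), by positivity, ?_⟩
    rw [pow_one, mul_div_assoc', div_le_iff₀ (by positivity)]
    nlinarith
  have hbr : ∀ n, 1 ≤ n → 0 ≤ b n * r ^ n := fun n hn => mul_nonneg (hb n hn) (by positivity)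
  have hbound : ∀ N, ∑ n ∈ Icc 1 N, b n * r ^ n ≤ s :=
    ((h.abs hb).mul_pow hr.le).sum_Icc_one_le (fun j _ => abs_nonneg (a j)) hbr
      fun N => by linarith [hA N]
  refine ⟨r, hr, summable_of_sum_range_le (c := s) (fun n => hbr _ n.succ_pos) fun N => ?_⟩
  rw [range_eq_Ico, sum_Ico_add' (fun n => b n * r ^ n), zero_add, Ico_add_one_right_eq_Icc]
  exact hbound N

theorem stmt14_general {v : ℝ} (hv : 0 < v) (m : ℕ → ℝ)
    (hconv : Summable (fun j : ℕ => m (j + 2) * v ^ (j + 2) / (Nat.factorial (j + 2) : ℝ)))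
    (K : ℝ) (c : ℕ → ℝ) (hcpos : ∀ n : ℕ, 1 ≤ n → 0 ≤ c n)
    (hrec : ∀ n : ℕ, 2 ≤ n →
      c n ≤ K * ∑ j ∈ Finset.Icc 2 n, (m j / (Nat.factorial j : ℝ)) *
        ∑ i ∈ (Finset.Nat.antidiagonalTuple j n).filter (fun i => ∀ k, 1 ≤ i k),
          ((Nat.factorial n : ℝ) / ∏ k, (Nat.factorial (i k) : ℝ)) * ∏ k, c (i k)) :
    ∃ lam : ℝ, 0 < lam ∧
      Summable (fun n : ℕ => c (n + 1) * lam ^ (n + 1) / (Nat.factorial (n + 1) : ℝ)) := by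
  have hsub : IsCompositionSubsolution (fun j => K * (m j / (j.factorial : ℝ)))
      (fun n => c n / (n.factorial : ℝ)) := fun n hn => by
    have hdiv := div_le_div_of_nonneg_right (hrec n hn) (Nat.cast_nonneg n.factorial)
    rw [mul_sum, sum_div] at hdiv
    simpa only [compositionSum_div_factorial, mul_assoc, mul_div_assoc] using hdiv
  have hsummable : Summable fun j =>
      K * (m (j + 2) / ((j + 2).factorial : ℝ)) * v ^ (j + 2) :=
    (hconv.mul_left K).congr fun j => by ring
  obtain ⟨r, hr, hsum⟩ :=
    hsub.exists_summable (fun n hn => div_nonneg (hcpos n hn) (Nat.cast_nonneg _)) hv hsummable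
  exact ⟨r, hr, hsum.congr fun n => div_mul_eq_mul_div _ _ _⟩

theorem stmt14 (lam₀ : ℝ) (hlam₀ : 0 < lam₀)
    (m : ℕ → ℝ) (hm : ∀ j : ℕ, 2 ≤ j → 0 ≤ m j)
    (hconv : ∀ u : ℝ, 0 ≤ u → u < lam₀ →
      Summable (fun j : ℕ => m (j + 2) * u ^ (j + 2) / (Nat.factorial (j + 2) : ℝ)))
    (K : ℝ) (hK : 0 < K)
    (c : ℕ → ℝ) (hcpos : ∀ n : ℕ, 1 ≤ n → 0 ≤ c n) (hc1 : c 1 ≤ 1)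
    (hrec : ∀ n : ℕ, 2 ≤ n →
      c n ≤ K * ∑ j ∈ Finset.Icc 2 n, (m j / (Nat.factorial j : ℝ)) *
        ∑ i ∈ (Finset.Nat.antidiagonalTuple j n).filter (fun i => ∀ k, 1 ≤ i k),
          ((Nat.factorial n : ℝ) / ∏ k, (Nat.factorial (i k) : ℝ)) * ∏ k, c (i k)) :
    ∃ lam : ℝ, 0 < lam ∧
      Summable (fun n : ℕ => c (n + 1) * lam ^ (n + 1) / (Nat.factorial (n + 1) : ℝ)) := by
  exact stmt14_general (half_pos hlam₀) m (hconv _ (half_pos hlam₀).le (half_lt_self hlam₀)) K c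
    hcpos hrec
end

section
/- For every β with 0 < β < 1, every γ > 0, and every λ ≥ 0, the cut-off stable branching mechanism satisfies ψ_β^γ(λ) := ∫₀^∞ r^{-(β+2)} e^{-γr} (e^{-λr} − 1 + λr) dr = c_β [ (γ+λ)^{1+β} − γ^{1+β} − (1+β) γ^β λ ], where c_β = Γ(1−β)/(β(1+β)). -/
open MeasureTheory Set

/-!
Both sides are first-order Taylor remainders at `γ` with increment `l`: the integrand contains that
of `s ↦ exp (-(s * r))`, and the right-hand side that of `s ↦ s ^ (1 + β)`. Writing each remainder
as `∫ s in γ..γ + l, (γ + l - s) * f'' s`, the two are linked by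
`∫ r in Ioi 0, r ^ (-β) * exp (-(s * r)) = Γ(1 - β) * s ^ (β - 1)` after exchanging the order of
integration.
-/

section TaylorRemainder

lemma integral_sub_smul_deriv_deriv_eq_taylor_remainder {E : Type*} [NormedAddCommGroup E]
    [NormedSpace ℝ E] [CompleteSpace E] {f f' f'' : ℝ → E} {a b : ℝ}
    (hf : ContinuousOn f (uIcc a b)) (hf' : ContinuousOn f' (uIcc a b))
    (hff' : ∀ x ∈ Ioo (min a b) (max a b), HasDerivAt f (f' x) x)
    (hf'f'' : ∀ x ∈ Ioo (min a b) (max a b), HasDerivAt f' (f'' x) x)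
    (hf'' : IntervalIntegrable f'' volume a b) :
    ∫ s in a..b, (b - s) • f'' s = f b - f a - (b - a) • f' a := by
  have by_parts : ∫ s in a..b, (b - s) • f'' s =
      (b - b) • f' b - (b - a) • f' a - ∫ s in a..b, (-1 : ℝ) • f' s :=
    intervalIntegral.integral_smul_deriv_eq_deriv_smul_of_hasDerivAt (by fun_prop) hf'
      (fun x _ ↦ (hasDerivAt_id x).const_sub b) hf'f'' (by simp) hf''
  have ftc : ∫ s in a..b, f' s = f b - f a :=
    intervalIntegral.integral_eq_sub_of_hasDeriv_right hf
      (fun x hx ↦ (hff' x hx).hasDerivWithinAt) hf'.intervalIntegrable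
  rw [by_parts, intervalIntegral.integral_smul, ftc]
  module

lemma sq_mul_integral_exp_neg_mul_mul_sub (a b r : ℝ) :
    r ^ 2 * ∫ s in a..b, Real.exp (-(s * r)) * (b - s) =
      Real.exp (-(a * r)) * (Real.exp (-((b - a) * r)) - 1 + (b - a) * r) := by
  have hexp (x : ℝ) : HasDerivAt (fun s ↦ Real.exp (-(s * r))) (-r * Real.exp (-(x * r))) x := by
    simpa [mul_comm] using ((hasDerivAt_id x).mul_const r).neg.exp
  have hexp' (x : ℝ) : HasDerivAt (fun s ↦ -r * Real.exp (-(s * r)))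
      (r ^ 2 * Real.exp (-(x * r))) x :=
    ((hexp x).const_mul (-r)).congr_deriv (by ring)
  have taylor := integral_sub_smul_deriv_deriv_eq_taylor_remainder (a := a) (b := b)
    (by fun_prop) (by fun_prop) (fun x _ ↦ hexp x) (fun x _ ↦ hexp' x)
    (Continuous.intervalIntegrable (by fun_prop) a b)
  have exp_split : Real.exp (-(b * r)) = Real.exp (-(a * r)) * Real.exp (-((b - a) * r)) := by
    rw [← Real.exp_add]
    ring_nf
  calc r ^ 2 * ∫ s in a..b, Real.exp (-(s * r)) * (b - s)
      = ∫ s in a..b, (b - s) • (r ^ 2 * Real.exp (-(s * r))) := by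
        rw [← intervalIntegral.integral_const_mul]
        congr! 2
        rw [smul_eq_mul]
        ring
    _ = Real.exp (-(a * r)) * (Real.exp (-((b - a) * r)) - 1 + (b - a) * r) := by
        rw [taylor, exp_split, smul_eq_mul]
        ring

lemma intervalIntegrable_rpow_sub_one {β a b : ℝ} (h : 0 < β ∨ 0 ∉ uIcc a b) :
    IntervalIntegrable (fun s : ℝ ↦ s ^ (β - 1)) volume a b :=
  h.elim (fun hβ ↦ intervalIntegral.intervalIntegrable_rpow' (by linarith))
    (fun h0 ↦ intervalIntegral.intervalIntegrable_rpow (.inr h0))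

lemma integral_rpow_sub_one_mul_sub {β a b : ℝ} (ha : 0 ≤ a) (hb : 0 ≤ b)
    (h : 0 < β ∨ β ≠ 0 ∧ β ≠ -1 ∧ 0 ∉ uIcc a b) :
    ∫ s in a..b, s ^ (β - 1) * (b - s) =
      (b ^ (1 + β) - a ^ (1 + β) - (1 + β) * a ^ β * (b - a)) / (β * (1 + β)) := by
  have hβ0 : β ≠ 0 := h.elim ne_of_gt And.left
  have hβ1 : 1 + β ≠ 0 := by
    rcases h with hβ | ⟨-, hβ, -⟩
    · positivity
    · exact fun h0 ↦ hβ (by linarith)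
  have hne : ∀ x ∈ Ioo (min a b) (max a b), x ≠ 0 := fun x hx ↦ ((le_min ha hb).trans_lt hx.1).ne'
  have hcont (p : ℝ) (hp : 0 < β → 0 ≤ p) : ContinuousOn (fun s : ℝ ↦ s ^ p) (uIcc a b) :=
    continuousOn_id.rpow_const fun x hx ↦
      (h.imp hp fun h ↦ ne_of_mem_of_not_mem hx h.2.2).symm
  have hderiv : ∀ x ∈ Ioo (min a b) (max a b),
      HasDerivAt (fun s : ℝ ↦ s ^ (1 + β)) ((1 + β) * x ^ β) x := fun x hx ↦
    (Real.hasDerivAt_rpow_const (.inl (hne x hx))).congr_deriv (by rw [add_sub_cancel_left])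
  have hderiv' : ∀ x ∈ Ioo (min a b) (max a b),
      HasDerivAt (fun s : ℝ ↦ (1 + β) * s ^ β) ((1 + β) * (β * x ^ (β - 1))) x := fun x hx ↦
    (Real.hasDerivAt_rpow_const (.inl (hne x hx))).const_mul _
  have taylor := integral_sub_smul_deriv_deriv_eq_taylor_remainder
    (hcont (1 + β) fun hβ ↦ by positivity) ((hcont β le_of_lt).const_mul (1 + β)) hderiv hderiv'
    (((intervalIntegrable_rpow_sub_one (h.imp_right fun h ↦ h.2.2)).const_mul β).const_mul (1 + β))
  rw [eq_div_iff (mul_ne_zero hβ0 hβ1), ← intervalIntegral.integral_mul_const]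
  calc ∫ s in a..b, s ^ (β - 1) * (b - s) * (β * (1 + β))
      = ∫ s in a..b, (b - s) • ((1 + β) * (β * s ^ (β - 1))) := by
        congr! 2 with s
        rw [smul_eq_mul]
        ring
    _ = b ^ (1 + β) - a ^ (1 + β) - (1 + β) * a ^ β * (b - a) := by
        rw [taylor, smul_eq_mul]
        ring

end TaylorRemainder

section MellinLaplace

variable {p : ℝ}

lemma integrableOn_rpow_mul_exp_neg_mul {s : ℝ} (hp : 0 < p) (hs : 0 < s) :
    IntegrableOn (fun r : ℝ ↦ r ^ (p - 1) * Real.exp (-(s * r))) (Ioi 0) := by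
  simpa using integrableOn_rpow_mul_exp_neg_mul_rpow (s := p - 1) (by linarith) one_pos hs

lemma integral_rpow_mul_exp_neg_mul {s : ℝ} (hp : 0 < p) (hs : 0 < s) :
    ∫ r in Ioi (0 : ℝ), r ^ (p - 1) * Real.exp (-(s * r)) = Real.Gamma p * s ^ (-p) := by
  rw [Real.integral_rpow_mul_exp_neg_mul_Ioi hp hs, one_div, Real.inv_rpow hs.le,
    Real.rpow_neg hs.le, mul_comm]

variable {μ : Measure ℝ} {g : ℝ → ℝ}

lemma integrable_prod_rpow_mul_exp_neg_mul_mul [SFinite μ] (hp : 0 < p) (hμ : ∀ᵐ s ∂μ, 0 < s)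
    (hint : Integrable (fun s ↦ s ^ (-p) * g s) μ) :
    Integrable (fun z : ℝ × ℝ ↦ z.1 ^ (p - 1) * Real.exp (-(z.2 * z.1)) * g z.2)
      ((volume.restrict (Ioi 0)).prod μ) := by
  have hg : AEStronglyMeasurable g μ := by
    refine ((by fun_prop : Measurable fun s : ℝ ↦ s ^ p).aestronglyMeasurable.mul
      hint.aestronglyMeasurable).congr ?_
    filter_upwards [hμ] with s hs
    rw [Pi.mul_apply, ← mul_assoc, ← Real.rpow_add hs, add_neg_cancel, Real.rpow_zero, one_mul]
  have hmeas : AEStronglyMeasurable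
      (fun z : ℝ × ℝ ↦ z.1 ^ (p - 1) * Real.exp (-(z.2 * z.1)) * g z.2)
      ((volume.restrict (Ioi 0)).prod μ) :=
    (by fun_prop : Measurable fun z : ℝ × ℝ ↦ z.1 ^ (p - 1) * Real.exp (-(z.2 * z.1)))
      |>.aestronglyMeasurable.mul hg.comp_snd
  refine (integrable_prod_iff' hmeas).2 ⟨?_, ?_⟩
  · filter_upwards [hμ] with s hs
    exact (integrableOn_rpow_mul_exp_neg_mul hp hs).mul_const (g s)
  · refine (hint.norm.const_mul (Real.Gamma p)).congr ?_
    filter_upwards [hμ] with s hs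
    calc Real.Gamma p * ‖s ^ (-p) * g s‖
        = (∫ r in Ioi (0 : ℝ), r ^ (p - 1) * Real.exp (-(s * r))) * ‖g s‖ := by
          rw [integral_rpow_mul_exp_neg_mul hp hs, norm_mul,
            Real.norm_of_nonneg (Real.rpow_nonneg hs.le _), mul_assoc]
      _ = ∫ r in Ioi (0 : ℝ), ‖r ^ (p - 1) * Real.exp (-(s * r)) * g s‖ := by
          rw [← integral_mul_const]
          refine setIntegral_congr_fun measurableSet_Ioi fun r (hr : 0 < r) ↦ ?_
          simp only [norm_mul, Real.norm_of_nonneg (Real.rpow_nonneg hr.le _), Real.norm_eq_abs,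
            Real.abs_exp]

lemma integral_rpow_mul_integral_exp_neg_mul_mul [SFinite μ] (hp : 0 < p) (hμ : ∀ᵐ s ∂μ, 0 < s)
    (hint : Integrable (fun s ↦ s ^ (-p) * g s) μ) :
    ∫ r in Ioi (0 : ℝ), r ^ (p - 1) * ∫ s, Real.exp (-(s * r)) * g s ∂μ =
      Real.Gamma p * ∫ s, s ^ (-p) * g s ∂μ := by
  calc ∫ r in Ioi (0 : ℝ), r ^ (p - 1) * ∫ s, Real.exp (-(s * r)) * g s ∂μ
      = ∫ r in Ioi (0 : ℝ), ∫ s, r ^ (p - 1) * Real.exp (-(s * r)) * g s ∂μ := by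
        simp only [← integral_const_mul, mul_assoc]
    _ = ∫ s, (∫ r in Ioi (0 : ℝ), r ^ (p - 1) * Real.exp (-(s * r)) * g s) ∂μ :=
        integral_integral_swap (integrable_prod_rpow_mul_exp_neg_mul_mul hp hμ hint)
    _ = ∫ s, Real.Gamma p * (s ^ (-p) * g s) ∂μ := by
        refine integral_congr_ae ?_
        filter_upwards [hμ] with s hs
        rw [integral_mul_const, integral_rpow_mul_exp_neg_mul hp hs, mul_assoc]
    _ = Real.Gamma p * ∫ s, s ^ (-p) * g s ∂μ := integral_const_mul _ _

lemma integral_rpow_mul_intervalIntegral_exp_neg_mul_mul {a b : ℝ} (hp : 0 < p) (ha : 0 ≤ a)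
    (hb : 0 ≤ b) (hint : IntervalIntegrable (fun s ↦ s ^ (-p) * g s) volume a b) :
    ∫ r in Ioi (0 : ℝ), r ^ (p - 1) * ∫ s in a..b, Real.exp (-(s * r)) * g s =
      Real.Gamma p * ∫ s in a..b, s ^ (-p) * g s := by
  have hpos : ∀ᵐ s ∂volume.restrict (uIoc a b), 0 < s :=
    ae_restrict_of_forall_mem measurableSet_uIoc fun s hs ↦ (le_min ha hb).trans_lt hs.1
  simp only [intervalIntegral.intervalIntegral_eq_integral_uIoc, smul_eq_mul,
    mul_left_comm _ (ite _ _ _), integral_const_mul,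
    integral_rpow_mul_integral_exp_neg_mul_mul hp hpos hint.def']

end MellinLaplace

lemma rpow_mul_exp_mul_exp_sub_one_add_eq_integral (β γ l : ℝ) {r : ℝ} (hr : 0 < r) :
    r ^ (-(β + 2)) * Real.exp (-γ * r) * (Real.exp (-l * r) - 1 + l * r) =
      r ^ (1 - β - 1) * ∫ s in γ..γ + l, Real.exp (-(s * r)) * (γ + l - s) := by
  have taylor := sq_mul_integral_exp_neg_mul_mul_sub γ (γ + l) r
  have rpow_split : r ^ (1 - β - 1) = r ^ (-(β + 2)) * r ^ 2 := by
    rw [← Real.rpow_add_natCast hr.ne']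
    push_cast
    ring_nf
  rw [add_sub_cancel_left] at taylor
  rw [rpow_split, neg_mul, neg_mul, mul_assoc, mul_assoc, taylor]

theorem stmt17_general {β γ l : ℝ} (hβ1 : β < 1) (hγ : 0 ≤ γ) (hγl : 0 ≤ γ + l)
    (h : 0 < β ∨ β ≠ 0 ∧ β ≠ -1 ∧ 0 ∉ uIcc γ (γ + l)) :
    (∫ r in Ioi (0 : ℝ),
        r ^ (-(β + 2)) * Real.exp (-γ * r) * (Real.exp (-l * r) - 1 + l * r)) =
      (Real.Gamma (1 - β) / (β * (1 + β))) *
        ((γ + l) ^ (1 + β) - γ ^ (1 + β) - (1 + β) * γ ^ β * l) := by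
  have hint : IntervalIntegrable (fun s ↦ s ^ (-(1 - β)) * (γ + l - s)) volume γ (γ + l) := by
    rw [neg_sub]
    exact (intervalIntegrable_rpow_sub_one (h.imp_right fun h ↦ h.2.2)).mul_continuousOn
      (by fun_prop)
  have rpow_taylor := integral_rpow_sub_one_mul_sub hγ hγl h
  rw [add_sub_cancel_left] at rpow_taylor
  rw [setIntegral_congr_fun measurableSet_Ioi fun r hr ↦
      rpow_mul_exp_mul_exp_sub_one_add_eq_integral β γ l hr,
    integral_rpow_mul_intervalIntegral_exp_neg_mul_mul (sub_pos.2 hβ1) hγ hγl hint,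
    neg_sub, rpow_taylor]
  ring

theorem stmt17 (β : ℝ) (hβ : 0 < β) (hβ1 : β < 1) (γ : ℝ) (hγ : 0 < γ)
    (l : ℝ) (hl : 0 ≤ l) :
    (∫ r in Set.Ioi (0 : ℝ),
        r ^ (-(β + 2)) * Real.exp (-γ * r) * (Real.exp (-l * r) - 1 + l * r)) =
      (Real.Gamma (1 - β) / (β * (1 + β))) *
        ((γ + l) ^ (1 + β) - γ ^ (1 + β) - (1 + β) * γ ^ β * l) :=
  stmt17_general hβ1 hγ.le (by positivity) (.inl hβ)
end
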